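/- Let ω be a state of a finite-dimensional tripartite system ABC and ω^ε = (1−ε)ω + ε·ω_AB ⊗ ω_C for ε ∈ (0,1). Then I(A:C|B)_{ω^ε} ≤ (1−ε)·I(A:C|B)_ω. -/

import Mathlib

open Matrix
open scoped ComplexOrder

noncomputable section

/-- The von Neumann entropy, extended to the cone of positive trace-class operators by
`H(ρ) = Tr η(ρ) − η(Tr ρ)` with `η(x) = −x log x` (computed spectrally). -/
def vnEnt {n : Type*} [Fintype n] [DecidableEq n] (ρ : Matrix n n ℂ) : ℝ :=
  if h : ρ.IsHermitian then
    (∑ i, Real.negMulLog (h.eigenvalues i)) - Real.negMulLog (∑ i, h.eigenvalues i)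
  else 0

/-- A state (density operator): positive semidefinite with unit trace. -/
def IsState {n : Type*} [Fintype n] (ρ : Matrix n n ℂ) : Prop :=
  ρ.PosSemidef ∧ ρ.trace = 1

section Tripartite

variable {a b c : Type*} [Fintype a] [DecidableEq a] [Fintype b] [DecidableEq b]
  [Fintype c] [DecidableEq c]

/-- Marginal `ω_A` of a tripartite operator. -/
def mA (ω : Matrix (a × b × c) (a × b × c) ℂ) : Matrix a a ℂ :=
  Matrix.of fun i j => ∑ k : b × c, ω (i, k) (j, k)

/-- Marginal `ω_B`. -/
def mB (ω : Matrix (a × b × c) (a × b × c) ℂ) : Matrix b b ℂ :=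
  Matrix.of fun i j => ∑ k : a, ∑ l : c, ω (k, i, l) (k, j, l)

/-- Marginal `ω_C`. -/
def mC (ω : Matrix (a × b × c) (a × b × c) ℂ) : Matrix c c ℂ :=
  Matrix.of fun i j => ∑ k : a, ∑ l : b, ω (k, l, i) (k, l, j)

/-- Marginal `ω_AB`. -/
def mAB (ω : Matrix (a × b × c) (a × b × c) ℂ) : Matrix (a × b) (a × b) ℂ :=
  Matrix.of fun p q => ∑ k : c, ω (p.1, p.2, k) (q.1, q.2, k)

/-- Marginal `ω_BC`. -/
def mBC (ω : Matrix (a × b × c) (a × b × c) ℂ) : Matrix (b × c) (b × c) ℂ :=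
  Matrix.of fun p q => ∑ k : a, ω (k, p) (k, q)

/-- Marginal `ω_AC`. -/
def mAC (ω : Matrix (a × b × c) (a × b × c) ℂ) : Matrix (a × c) (a × c) ℂ :=
  Matrix.of fun p q => ∑ k : b, ω (p.1, k, p.2) (q.1, k, q.2)

/-- Conditional mutual information `I(A:C|B)_ω = H(ω_AB)+H(ω_BC)−H(ω_ABC)−H(ω_B)`. -/
def cmi (ω : Matrix (a × b × c) (a × b × c) ℂ) : ℝ :=
  vnEnt (mAB ω) + vnEnt (mBC ω) - vnEnt ω - vnEnt (mB ω)

end Tripartite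

/-- The product operator `ω_AB ⊗ ω_C` regarded on `A ⊗ (B ⊗ C)`. -/
def prodABC {a b c : Type*} [Fintype a] [DecidableEq a] [Fintype b] [DecidableEq b]
    [Fintype c] [DecidableEq c] (ω : Matrix (a × b × c) (a × b × c) ℂ) :
    Matrix (a × b × c) (a × b × c) ℂ :=
  Matrix.of fun p q => mAB ω (p.1, p.2.1) (q.1, q.2.1) * mC ω p.2.2 q.2.2

section RelativeEntropy

variable {n : Type*} [Fintype n] [DecidableEq n]

/-- Bregman divergence of `x ↦ x log x`. -/
def klTerm (x y : ℝ) : ℝ := x * Real.log x - x * Real.log y - (x - y)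

/-- The integrand in `klTerm x y = ∫ s in 0..1, klIntegrand x y s`. -/
def klIntegrand (x y s : ℝ) : ℝ := (1 - s) * ((x - y) ^ 2 / (s * x + (1 - s) * y))

lemma klIntegrand_integral {x y : ℝ} (hx : 0 ≤ x) (hy : 0 ≤ y) (hxy : y = 0 → x = 0) :
    IntervalIntegrable (klIntegrand x y) MeasureTheory.volume 0 1 ∧
      ∫ s in (0 : ℝ)..1, klIntegrand x y s = klTerm x y := by
  rcases hy.eq_or_lt with rfl | hy
  · obtain rfl := hxy rfl
    have h : klIntegrand 0 0 = fun _ => 0 := by ext; simp [klIntegrand]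
    simp [h, klTerm]
  have hpos : ∀ s ∈ Set.Ioo (0 : ℝ) 1, 0 < s * x + (1 - s) * y := fun s hs => by
    have := mul_pos (sub_pos.2 hs.2) hy
    have := mul_nonneg hs.1.le hx
    linarith
  set F : ℝ → ℝ := fun s => x * Real.log (s * x + (1 - s) * y) - s * (x - y) with hF
  have hcont : ContinuousOn F (Set.Icc 0 1) := by
    rcases hx.eq_or_lt with rfl | hx
    · simp only [hF, zero_mul]
      fun_prop
    · refine ContinuousOn.sub (continuousOn_const.mul (ContinuousOn.log (by fun_prop) ?_))
        (by fun_prop)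
      intro s hs
      rcases hs.1.eq_or_lt with rfl | h
      · simpa using hy.ne'
      · have := mul_pos h hx
        have := mul_nonneg (sub_nonneg.2 hs.2) hy.le
        linarith
  have hderiv : ∀ s ∈ Set.Ioo (0 : ℝ) 1, HasDerivAt F (klIntegrand x y s) s := by
    intro s hs
    have hne := (hpos s hs).ne'
    have h1 : HasDerivAt (fun s : ℝ => s * x + (1 - s) * y) (1 * x + (0 - 1) * y) s :=
      ((hasDerivAt_id s).mul_const x).add
        (((hasDerivAt_const s 1).sub (hasDerivAt_id s)).mul_const y)
    have h2 := ((h1.log hne).const_mul x).sub ((hasDerivAt_id s).mul_const (x - y))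
    refine h2.congr_deriv ?_
    rw [klIntegrand, mul_div_assoc', mul_div_assoc', div_sub' hne, div_left_inj' hne]
    ring
  have hint : IntervalIntegrable (klIntegrand x y) MeasureTheory.volume 0 1 := by
    refine intervalIntegral.intervalIntegrable_deriv_of_nonneg (g := F) ?_ ?_ ?_
    · simpa using hcont
    · simpa using hderiv
    · intro s hs
      have hs : s ∈ Set.Ioo (0 : ℝ) 1 := by simpa using hs
      exact mul_nonneg (sub_nonneg.2 hs.2.le) (div_nonneg (sq_nonneg _) (hpos s hs).le)
  refine ⟨hint, ?_⟩
  rw [intervalIntegral.integral_eq_sub_of_hasDerivAt_of_le zero_le_one hcont hderiv hint]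
  simp only [hF, klTerm]
  ring_nf

/-- Spectral decompositions `A = U diag(x) Uᴴ`, `B = V diag(y) Vᴴ` of two positive semidefinite
matrices such that the support of `A` is contained in that of `B`. -/
structure SpectralPair (A B : Matrix n n ℂ) where
  U : Matrix n n ℂ
  V : Matrix n n ℂ
  x : n → ℝ
  y : n → ℝ
  hU : Uᴴ * U = 1
  hV : Vᴴ * V = 1
  hA : A = U * diagonal (fun i => (x i : ℂ)) * Uᴴ
  hB : B = V * diagonal (fun i => (y i : ℂ)) * Vᴴ
  hx : ∀ i, 0 ≤ x i
  hy : ∀ i, 0 ≤ y i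
  supp : ∀ i j, (Uᴴ * V) i j ≠ 0 → y j = 0 → x i = 0

namespace SpectralPair

variable {A B : Matrix n n ℂ}

/-- The overlap `|⟨uᵢ, vⱼ⟩|²` of the eigenvectors. -/
def overlap (P : SpectralPair A B) (i j : n) : ℝ := Complex.normSq ((P.Uᴴ * P.V) i j)

/-- The relative entropy `Tr (A log A - A log B - A + B)`. -/
def relEnt (P : SpectralPair A B) : ℝ :=
  ∑ i, ∑ j, P.overlap i j * klTerm (P.x i) (P.y j)

/-- The integrand in the integral representation of the relative entropy. -/
def divIntegrand (P : SpectralPair A B) (s : ℝ) : ℝ :=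
  ∑ i, ∑ j, P.overlap i j * klIntegrand (P.x i) (P.y j) s

lemma divIntegrand_integral (P : SpectralPair A B) :
    IntervalIntegrable P.divIntegrand MeasureTheory.volume 0 1 ∧
      ∫ s in (0 : ℝ)..1, P.divIntegrand s = P.relEnt := by
  have key : ∀ i j, IntervalIntegrable
      (fun s => P.overlap i j * klIntegrand (P.x i) (P.y j) s) MeasureTheory.volume 0 1 ∧
      ∫ s in (0 : ℝ)..1, P.overlap i j * klIntegrand (P.x i) (P.y j) s =
        P.overlap i j * klTerm (P.x i) (P.y j) := by
    intro i j
    by_cases h : (P.Uᴴ * P.V) i j = 0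
    · simp [overlap, h]
    · obtain ⟨h1, h2⟩ := klIntegrand_integral (P.hx i) (P.hy j) (P.supp i j h)
      exact ⟨h1.const_mul _, by rw [intervalIntegral.integral_const_mul, h2]⟩
  have hi : ∀ i, IntervalIntegrable
      (fun s => ∑ j, P.overlap i j * klIntegrand (P.x i) (P.y j) s) MeasureTheory.volume 0 1 := by
    intro i
    simpa only [Finset.sum_fn] using
      IntervalIntegrable.sum (f := fun j s => P.overlap i j * klIntegrand (P.x i) (P.y j) s)
        Finset.univ (fun j _ => (key i j).1)
  constructor
  · unfold divIntegrand
    simpa only [Finset.sum_fn] using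
      IntervalIntegrable.sum (f := fun i s => ∑ j, P.overlap i j * klIntegrand (P.x i) (P.y j) s)
        Finset.univ (fun i _ => hi i)
  · simp only [divIntegrand, relEnt]
    rw [intervalIntegral.integral_finsetSum fun i _ => hi i]
    refine Finset.sum_congr rfl fun i _ => ?_
    rw [intervalIntegral.integral_finsetSum fun j _ => (key i j).1]
    exact Finset.sum_congr rfl fun j _ => (key i j).2

end SpectralPair

/-- For fixed `s` and `Y` this is linear in `(A, B)`; its supremum over `Y` is the quadratic form
`⟨A - B, (s L_A + (1 - s) R_B)⁻¹ (A - B)⟩`. -/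
def varForm (s : ℝ) (Y A B : Matrix n n ℂ) : ℝ :=
  (2 * trace (Yᴴ * (A - B)) - s * trace (Yᴴ * A * Y) - (1 - s) * trace (Yᴴ * Y * B)).re

lemma varForm_linear (s p q : ℝ) (Y A₁ B₁ A₂ B₂ : Matrix n n ℂ) :
    varForm s Y (p • A₁ + q • A₂) (p • B₁ + q • B₂) =
      p * varForm s Y A₁ B₁ + q * varForm s Y A₂ B₂ := by
  simp only [varForm, mul_sub, mul_add, add_mul, Matrix.mul_smul, Matrix.smul_mul, trace_add,
    trace_sub, trace_smul, Complex.real_smul, Complex.add_re, Complex.sub_re, Complex.mul_re,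
    Complex.ofReal_re, Complex.ofReal_im, Complex.mul_im, Complex.sub_im,
    Complex.one_re, Complex.one_im, Complex.re_ofNat, Complex.im_ofNat]
  ring

namespace SpectralPair

variable {A B : Matrix n n ℂ}

lemma varForm_eq (P : SpectralPair A B) (s : ℝ) (Z : Matrix n n ℂ) :
    varForm s (P.U * Z * P.Vᴴ) A B =
      ∑ i, ∑ j, (2 * (P.x i - P.y j) * (star (Z i j) * (P.Uᴴ * P.V) i j).re
        - (s * P.x i + (1 - s) * P.y j) * Complex.normSq (Z i j)) := by
  obtain ⟨U, V, x, y, hU, hV, rfl, rfl, -, -, -⟩ := P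
  simp only
  set Dx := diagonal (fun i => (x i : ℂ))
  set Dy := diagonal (fun i => (y i : ℂ))
  have hU' : ∀ M : Matrix n n ℂ, Uᴴ * (U * M) = M := fun M => by
    rw [← Matrix.mul_assoc, hU, Matrix.one_mul]
  have hV' : ∀ M : Matrix n n ℂ, Vᴴ * (V * M) = M := fun M => by
    rw [← Matrix.mul_assoc, hV, Matrix.one_mul]
  have e1 : trace ((U * Z * Vᴴ)ᴴ * (U * Dx * Uᴴ)) = trace (Zᴴ * (Dx * (Uᴴ * V))) := by
    simp only [conjTranspose_mul, conjTranspose_conjTranspose, Matrix.mul_assoc, hU']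
    rw [trace_mul_comm V]
    simp only [Matrix.mul_assoc]
  have e2 : trace ((U * Z * Vᴴ)ᴴ * (V * Dy * Vᴴ)) = trace (Zᴴ * ((Uᴴ * V) * Dy)) := by
    simp only [conjTranspose_mul, conjTranspose_conjTranspose, Matrix.mul_assoc]
    rw [trace_mul_comm V]
    simp only [Matrix.mul_assoc, hV, Matrix.mul_one]
  have e3 : trace ((U * Z * Vᴴ)ᴴ * (U * Dx * Uᴴ) * (U * Z * Vᴴ)) = trace (Zᴴ * (Dx * Z)) := by
    simp only [conjTranspose_mul, conjTranspose_conjTranspose, Matrix.mul_assoc, hU']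
    rw [trace_mul_comm V]
    simp only [Matrix.mul_assoc, hV, Matrix.mul_one]
  have e4 : trace ((U * Z * Vᴴ)ᴴ * (U * Z * Vᴴ) * (V * Dy * Vᴴ)) = trace (Zᴴ * (Z * Dy)) := by
    simp only [conjTranspose_mul, conjTranspose_conjTranspose, Matrix.mul_assoc, hU', hV']
    rw [trace_mul_comm V]
    simp only [Matrix.mul_assoc, hV, Matrix.mul_one]
  have ht : ∀ M N : Matrix n n ℂ, trace (Mᴴ * N) = ∑ i, ∑ j, star (M i j) * N i j := by
    intro M N
    rw [Finset.sum_comm]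
    simp [trace, Matrix.mul_apply]
  rw [varForm, mul_sub, trace_sub, e1, e2, e3, e4]
  simp only [ht, Dx, Dy, diagonal_mul, mul_diagonal]
  simp only [Finset.mul_sum, ← Finset.sum_sub_distrib, Complex.re_sum]
  refine Finset.sum_congr rfl fun i _ => Finset.sum_congr rfl fun j _ => ?_
  simp [Complex.normSq_apply]
  ring

lemma varForm_le (P : SpectralPair A B) {s : ℝ} (hs : s ∈ Set.Ioo (0 : ℝ) 1)
    (Y : Matrix n n ℂ) : (1 - s) * varForm s Y A B ≤ P.divIntegrand s := by
  have hU : P.U * P.Uᴴ = 1 := mul_eq_one_comm.1 P.hU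
  have hY : Y = P.U * (P.Uᴴ * Y * P.V) * P.Vᴴ := by
    have hV : P.V * P.Vᴴ = 1 := mul_eq_one_comm.1 P.hV
    simp only [Matrix.mul_assoc, hV, Matrix.mul_one]
    rw [← Matrix.mul_assoc, hU, Matrix.one_mul]
  rw [hY, P.varForm_eq, divIntegrand, Finset.mul_sum]
  refine Finset.sum_le_sum fun i _ => ?_
  rw [Finset.mul_sum]
  refine Finset.sum_le_sum fun j _ => ?_
  have hs1 : 0 < 1 - s := sub_pos.2 hs.2
  rw [klIntegrand, mul_left_comm]
  refine mul_le_mul_of_nonneg_left ?_ hs1.le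
  rw [overlap]
  generalize (P.Uᴴ * Y * P.V) i j = z
  generalize (P.Uᴴ * P.V) i j = w
  have hx := mul_nonneg hs.1.le (P.hx i)
  have hy := mul_nonneg hs1.le (P.hy j)
  rcases (add_nonneg hx hy).eq_or_lt with h0 | hpos
  · have hx0 : P.x i = 0 := by
      have : s * P.x i = 0 := by linarith
      simpa [hs.1.ne'] using this
    have hy0 : P.y j = 0 := by
      have : (1 - s) * P.y j = 0 := by linarith
      simpa [hs1.ne'] using this
    simp [hx0, hy0]
  · set d := s * P.x i + (1 - s) * P.y j
    rw [mul_div_assoc', le_div_iff₀ hpos]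
    have h1 := sq_nonneg (d * z.re - (P.x i - P.y j) * w.re)
    have h2 := sq_nonneg (d * z.im - (P.x i - P.y j) * w.im)
    simp only [Complex.normSq_apply, Complex.mul_re, Complex.star_def, Complex.conj_re,
      Complex.conj_im]
    linarith

lemma exists_varForm_eq (P : SpectralPair A B) {s : ℝ} (hs : s ∈ Set.Ioo (0 : ℝ) 1) :
    ∃ Y, P.divIntegrand s = (1 - s) * varForm s Y A B := by
  refine ⟨P.U * (Matrix.of fun i j => (((P.x i - P.y j) / (s * P.x i + (1 - s) * P.y j) : ℝ) : ℂ)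
    * (P.Uᴴ * P.V) i j) * P.Vᴴ, ?_⟩
  rw [P.varForm_eq, divIntegrand, Finset.mul_sum]
  refine Finset.sum_congr rfl fun i _ => ?_
  rw [Finset.mul_sum]
  refine Finset.sum_congr rfl fun j _ => ?_
  rw [klIntegrand, mul_left_comm, overlap, of_apply]
  congr 1
  generalize (P.Uᴴ * P.V) i j = w
  have hs1 : 0 < 1 - s := sub_pos.2 hs.2
  simp only [Complex.normSq_apply, Complex.mul_re, Complex.mul_im, Complex.star_def,
    Complex.conj_re, Complex.conj_im, Complex.ofReal_re, Complex.ofReal_im]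
  set d := s * P.x i + (1 - s) * P.y j
  by_cases hd : d = 0
  · simp [hd]
  · field_simp
    ring

/-- Joint convexity of the relative entropy. -/
theorem relEnt_convex {A₁ B₁ A₂ B₂ : Matrix n n ℂ} {p q : ℝ} (hp : 0 ≤ p) (hq : 0 ≤ q)
    (P : SpectralPair (p • A₁ + q • A₂) (p • B₁ + q • B₂)) (P₁ : SpectralPair A₁ B₁)
    (P₂ : SpectralPair A₂ B₂) : P.relEnt ≤ p * P₁.relEnt + q * P₂.relEnt := by
  obtain ⟨h, e⟩ := P.divIntegrand_integral
  obtain ⟨h₁, e₁⟩ := P₁.divIntegrand_integral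
  obtain ⟨h₂, e₂⟩ := P₂.divIntegrand_integral
  rw [← e, ← e₁, ← e₂, ← intervalIntegral.integral_const_mul, ← intervalIntegral.integral_const_mul,
    ← intervalIntegral.integral_add (h₁.const_mul p) (h₂.const_mul q)]
  refine intervalIntegral.integral_mono_on_of_le_Ioo zero_le_one h
    ((h₁.const_mul p).add (h₂.const_mul q)) fun s hs => ?_
  obtain ⟨Y, hY⟩ := P.exists_varForm_eq hs
  have i₁ := mul_le_mul_of_nonneg_left (P₁.varForm_le hs Y) hp
  have i₂ := mul_le_mul_of_nonneg_left (P₂.varForm_le hs Y) hq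
  rw [hY, varForm_linear]
  linarith

end SpectralPair

end RelativeEntropy

section Entropy

variable {m n : Type*} [Fintype m] [DecidableEq m] [Fintype n] [DecidableEq n]

lemma exists_unitary_diagonal {A : Matrix n n ℂ} (hA : A.PosSemidef) :
    ∃ (U : Matrix n n ℂ) (x : n → ℝ), Uᴴ * U = 1 ∧
      A = U * diagonal (fun i => (x i : ℂ)) * Uᴴ ∧ ∀ i, 0 ≤ x i := by
  refine ⟨hA.1.eigenvectorUnitary, hA.1.eigenvalues, ?_, ?_, hA.eigenvalues_nonneg⟩
  · exact Unitary.coe_star_mul_self _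
  · have h := hA.1.spectral_theorem
    rw [Unitary.conjStarAlgAut_apply] at h
    exact h

lemma vnEnt_eq_of_charpoly {A : Matrix n n ℂ} (hA : A.IsHermitian) {x : m → ℝ}
    (h : A.charpoly = (diagonal fun i => (x i : ℂ)).charpoly) :
    vnEnt A = ∑ i, Real.negMulLog (x i) - Real.negMulLog (∑ i, x i) := by
  have hroots := hA.roots_charpoly_eq_eigenvalues
  have hdiag : (diagonal fun i => (x i : ℂ)).charpoly.roots =
      Finset.univ.val.map fun i => (x i : ℂ) := by
    rw [charpoly_diagonal, ← Polynomial.roots_multiset_prod_X_sub_C (Finset.univ.val.map _),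
      Multiset.map_map]
    rfl
  rw [h, hdiag] at hroots
  have hmap : Finset.univ.val.map x = Finset.univ.val.map hA.eigenvalues := by
    have := congrArg (Multiset.map Complex.re) hroots
    simpa [Multiset.map_map, Function.comp_def] using this
  have hsum : ∀ f : ℝ → ℝ, ∑ i, f (hA.eigenvalues i) = ∑ i, f (x i) := by
    intro f
    have := congrArg (fun s => (s.map f).sum) hmap
    simp only [Multiset.map_map] at this
    exact this.symm
  rw [vnEnt, dif_pos hA, hsum, show ∑ i, hA.eigenvalues i = ∑ i, x i from hsum id]

lemma vnEnt_eq_of_unitary {A U : Matrix n n ℂ} {x : n → ℝ} (hU : Uᴴ * U = 1)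
    (hA : A = U * diagonal (fun i => (x i : ℂ)) * Uᴴ) :
    vnEnt A = ∑ i, Real.negMulLog (x i) - Real.negMulLog (∑ i, x i) := by
  have hH : A.IsHermitian := by
    rw [hA, IsHermitian]
    simp [Matrix.mul_assoc, diagonal_conjTranspose, Pi.star_def]
  refine vnEnt_eq_of_charpoly hH ?_
  rw [hA, charpoly_mul_comm, ← Matrix.mul_assoc, hU, Matrix.one_mul]

lemma vnEnt_submatrix_equiv {A : Matrix n n ℂ} (hA : A.IsHermitian) (e : m ≃ n) :
    vnEnt (A.submatrix e e) = vnEnt A := by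
  have hc : (A.submatrix e e).charpoly = A.charpoly := by
    simpa [reindex_apply] using charpoly_reindex e.symm A
  have hd : A.charpoly = (diagonal fun i => (hA.eigenvalues i : ℂ)).charpoly := by
    rw [hA.charpoly_eq, charpoly_diagonal]
    rfl
  rw [vnEnt_eq_of_charpoly (hA.submatrix e) (hc.trans hd), vnEnt_eq_of_charpoly hA hd]

lemma trace_unitary_diagonal {A U : Matrix n n ℂ} {x : n → ℝ} (hU : Uᴴ * U = 1)
    (hA : A = U * diagonal (fun i => (x i : ℂ)) * Uᴴ) : ((∑ i, x i : ℝ) : ℂ) = A.trace := by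
  rw [hA, Matrix.mul_assoc, trace_mul_comm, Matrix.mul_assoc, hU]
  simp [trace]

lemma sum_eq_one_of_trace {A U : Matrix n n ℂ} {x : n → ℝ} (hU : Uᴴ * U = 1)
    (hA : A = U * diagonal (fun i => (x i : ℂ)) * Uᴴ) (ht : A.trace = 1) : ∑ i, x i = 1 := by
  exact_mod_cast (trace_unitary_diagonal hU hA).trans ht

/-- The entropy is additive on product states. -/
lemma vnEnt_kronecker {A : Matrix m m ℂ} {B : Matrix n n ℂ} (hA : IsState A) (hB : IsState B) :
    vnEnt (kroneckerMap (· * ·) A B) = vnEnt A + vnEnt B := by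
  obtain ⟨U, x, hU, eA, -⟩ := exists_unitary_diagonal hA.1
  obtain ⟨V, y, hV, eB, -⟩ := exists_unitary_diagonal hB.1
  have sx := sum_eq_one_of_trace hU eA hA.2
  have sy := sum_eq_one_of_trace hV eB hB.2
  have hUV : (kroneckerMap (· * ·) U V)ᴴ * kroneckerMap (· * ·) U V = 1 := by
    rw [conjTranspose_kronecker, ← mul_kronecker_mul, hU, hV, one_kronecker_one]
  have eAB : kroneckerMap (· * ·) A B = kroneckerMap (· * ·) U V *
      diagonal (fun i : m × n => ((x i.1 * y i.2 : ℝ) : ℂ)) * (kroneckerMap (· * ·) U V)ᴴ := by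
    rw [eA, eB, mul_kronecker_mul, mul_kronecker_mul, diagonal_kronecker_diagonal,
      conjTranspose_kronecker]
    simp
  have s1 : ∑ i : m × n, x i.1 * y i.2 = 1 := by
    rw [Fintype.sum_prod_type, ← Finset.sum_mul_sum, sx, sy, one_mul]
  have s2 : ∑ i : m × n, Real.negMulLog (x i.1 * y i.2) =
      ∑ i, Real.negMulLog (x i) + ∑ i, Real.negMulLog (y i) := by
    simp only [Real.negMulLog_mul, Fintype.sum_prod_type, Finset.sum_add_distrib,
      ← Finset.sum_mul, ← Finset.mul_sum, sx, sy, one_mul]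
  rw [vnEnt_eq_of_unitary hUV eAB, vnEnt_eq_of_unitary hU eA, vnEnt_eq_of_unitary hV eB, s1, s2,
    sx, sy]
  simp

end Entropy

section Marginals

lemma IsState.mix {n : Type*} [Fintype n] {ω τ : Matrix n n ℂ} (hω : IsState ω) (hτ : IsState τ)
    {p q : ℝ} (hp : 0 ≤ p) (hq : 0 ≤ q) (hpq : p + q = 1) : IsState (p • ω + q • τ) := by
  refine ⟨(hω.1.smul hp).add (hτ.1.smul hq), ?_⟩
  rw [trace_add, trace_smul, trace_smul, hω.2, hτ.2, ← add_smul, hpq, one_smul]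

lemma mB_eq_mAB {a b c : Type*} [Fintype a] [Fintype c]
    (ω : Matrix (a × b × c) (a × b × c) ℂ) :
    mB ω = Matrix.of fun i j => ∑ k, mAB ω (k, i) (k, j) := rfl

lemma mBC_eq_sum {a b c : Type*} [Fintype a] (ω : Matrix (a × b × c) (a × b × c) ℂ) :
    mBC ω = ∑ k, ω.submatrix (Prod.mk k) (Prod.mk k) := by
  ext p q
  simp [mBC, Matrix.sum_apply]

lemma mBC_smul_add {a b c : Type*} [Fintype a] (ω τ : Matrix (a × b × c) (a × b × c) ℂ)
    (p q : ℝ) :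
    mBC (p • ω + q • τ) = p • mBC ω + q • mBC τ := by
  ext i j
  simp [mBC, Finset.sum_add_distrib, Finset.mul_sum]

variable {a b c : Type*} [Fintype a] [Fintype b] [Fintype c]

lemma IsState.mBC {ω : Matrix (a × b × c) (a × b × c) ℂ} (hω : IsState ω) :
    IsState (mBC ω) := by
  refine ⟨?_, ?_⟩
  · rw [mBC_eq_sum]
    exact posSemidef_sum _ fun k _ => hω.1.submatrix _
  · rw [← hω.2]
    simp only [trace, diag_apply, _root_.mBC, of_apply]
    rw [Finset.sum_comm, Fintype.sum_prod_type (γ := ℂ)]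

lemma IsState.mAB {ω : Matrix (a × b × c) (a × b × c) ℂ} (hω : IsState ω) :
    IsState (mAB ω) := by
  have h : _root_.mAB ω = ∑ k, ω.submatrix (fun p : a × b => (p.1, p.2, k))
      (fun p : a × b => (p.1, p.2, k)) := by
    ext p q
    simp [_root_.mAB, Matrix.sum_apply]
  refine ⟨?_, ?_⟩
  · rw [h]
    exact posSemidef_sum _ fun k _ => hω.1.submatrix _
  · rw [← hω.2]
    simp [trace, _root_.mAB, Fintype.sum_prod_type]

lemma IsState.mB {ω : Matrix (a × b × c) (a × b × c) ℂ} (hω : IsState ω) :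
    IsState (mB ω) := by
  have h : _root_.mB ω = ∑ k : a, ∑ l : c, ω.submatrix (fun i : b => (k, i, l))
      (fun i : b => (k, i, l)) := by
    ext p q
    simp [_root_.mB, Matrix.sum_apply]
  refine ⟨?_, ?_⟩
  · rw [h]
    exact posSemidef_sum _ fun k _ => posSemidef_sum _ fun l _ => hω.1.submatrix _
  · rw [← hω.2]
    simp only [trace, diag_apply, _root_.mB, of_apply, Fintype.sum_prod_type]
    rw [Finset.sum_comm]

lemma IsState.mC {ω : Matrix (a × b × c) (a × b × c) ℂ} (hω : IsState ω) :
    IsState (mC ω) := by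
  have h : _root_.mC ω = ∑ k : a, ∑ l : b, ω.submatrix (fun i : c => (k, l, i))
      (fun i : c => (k, l, i)) := by
    ext p q
    simp [_root_.mC, Matrix.sum_apply]
  refine ⟨?_, ?_⟩
  · rw [h]
    exact posSemidef_sum _ fun k _ => posSemidef_sum _ fun l _ => hω.1.submatrix _
  · rw [← hω.2]
    simp only [trace, diag_apply, _root_.mC, of_apply, Fintype.sum_prod_type]
    rw [Finset.sum_comm]
    exact Finset.sum_congr rfl fun _ _ => Finset.sum_comm

lemma mBC_conj_kronecker [DecidableEq a] (ω : Matrix (a × b × c) (a × b × c) ℂ)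
    (V : Matrix (b × c) (b × c) ℂ) :
    mBC ((kroneckerMap (· * ·) (1 : Matrix a a ℂ) V)ᴴ * ω *
      kroneckerMap (· * ·) (1 : Matrix a a ℂ) V) = Vᴴ * mBC ω * V := by
  have h : ∀ (k : a) (p q : b × c), ((kroneckerMap (· * ·) (1 : Matrix a a ℂ) V)ᴴ * ω *
      kroneckerMap (· * ·) (1 : Matrix a a ℂ) V) (k, p) (k, q) =
      (Vᴴ * ω.submatrix (Prod.mk k) (Prod.mk k) * V) p q := by
    intro k p q
    rw [conjTranspose_kronecker, conjTranspose_one]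
    simp only [Matrix.mul_apply, kroneckerMap_apply, submatrix_apply,
      Fintype.sum_prod_type (α₁ := a)]
    simp only [one_apply, ite_mul, mul_ite, one_mul, zero_mul, mul_zero]
    simp
  ext p q
  simp only [mBC_eq_sum ω, Matrix.mul_sum, Matrix.sum_mul, Matrix.sum_apply, ← h]
  rfl

end Marginals

section ConditionalEntropy

variable {a b c : Type*} [Fintype a] [DecidableEq a] [Fintype b] [DecidableEq b]
  [Fintype c] [DecidableEq c]

lemma exists_spectralPair {ω B : Matrix (a × b × c) (a × b × c) ℂ} (hω : IsState ω)
    (hB : B = kroneckerMap (· * ·) (1 : Matrix a a ℂ) (mBC ω)) : ∃ P : SpectralPair ω B,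
      P.relEnt = vnEnt (mBC ω) - vnEnt ω - 1 + Fintype.card a := by
  obtain ⟨U, x, hU, eA, hx⟩ := exists_unitary_diagonal hω.1
  obtain ⟨V, y, hV, eB, hy⟩ := exists_unitary_diagonal hω.mBC.1
  have sx := sum_eq_one_of_trace hU eA hω.2
  have sy := sum_eq_one_of_trace hV eB hω.mBC.2
  set W := kroneckerMap (· * ·) (1 : Matrix a a ℂ) V with hWdef
  have hW : Wᴴ * W = 1 := by
    rw [conjTranspose_kronecker, ← mul_kronecker_mul, hV, conjTranspose_one, one_mul,
      one_kronecker_one]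
  have eW : B = W * diagonal (fun i : a × b × c => (y i.2 : ℂ)) * Wᴴ := by
    have hd : diagonal (fun i : a × b × c => (y i.2 : ℂ)) =
        kroneckerMap (· * ·) (1 : Matrix a a ℂ) (diagonal fun i => (y i : ℂ)) := by
      rw [← diagonal_one, diagonal_kronecker_diagonal]
      simp
    rw [hB, hd, conjTranspose_kronecker, ← mul_kronecker_mul, ← mul_kronecker_mul, ← eB]
    simp
  -- the diagonal of `ω_BC` in its eigenbasis, computed from the eigenvectors of `ω`
  have hmarg : ∀ p, ∑ k : a, ∑ i, Complex.normSq ((Uᴴ * W) i (k, p)) * x i = y p := by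
    intro p
    have h1 : Vᴴ * mBC ω * V = diagonal fun i => (y i : ℂ) := by
      conv_lhs => rw [eB]
      simp only [Matrix.mul_assoc, hV, Matrix.mul_one]
      rw [← Matrix.mul_assoc, hV, Matrix.one_mul]
    have h2 := congrFun₂ (mBC_conj_kronecker ω V) p p
    rw [h1, ← hWdef, diagonal_apply_eq] at h2
    have h3 : Wᴴ * ω * W = (Uᴴ * W)ᴴ * (diagonal (fun i => (x i : ℂ)) * (Uᴴ * W)) := by
      conv_lhs => rw [eA]
      simp only [conjTranspose_mul, conjTranspose_conjTranspose, Matrix.mul_assoc]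
    rw [h3] at h2
    have h4 := congrArg Complex.re h2
    rw [Complex.ofReal_re] at h4
    rw [← h4]
    simp only [mBC, of_apply, Complex.re_sum]
    refine Finset.sum_congr rfl fun k _ => ?_
    rw [Matrix.mul_apply, Complex.re_sum]
    refine Finset.sum_congr rfl fun i _ => ?_
    rw [diagonal_mul, conjTranspose_apply]
    simp [Complex.normSq_apply]
    ring
  have hrow : ∀ i, ∑ j, Complex.normSq ((Uᴴ * W) i j) = 1 := by
    intro i
    have h : (Uᴴ * W) * (Uᴴ * W)ᴴ = 1 := by
      have hW' : W * Wᴴ = 1 := mul_eq_one_comm.1 hW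
      rw [conjTranspose_mul, conjTranspose_conjTranspose, Matrix.mul_assoc, ← Matrix.mul_assoc W,
        hW', Matrix.one_mul, hU]
    have h' := congrArg Complex.re (congrFun₂ h i i)
    rw [Matrix.mul_apply, Complex.re_sum, one_apply_eq, Complex.one_re] at h'
    rw [← h']
    refine Finset.sum_congr rfl fun j _ => ?_
    simp [conjTranspose_apply, Complex.normSq_apply]
  have hcol : ∀ j, ∑ i, Complex.normSq ((Uᴴ * W) i j) = 1 := by
    intro j
    have h : (Uᴴ * W)ᴴ * (Uᴴ * W) = 1 := by
      have hU' : U * Uᴴ = 1 := mul_eq_one_comm.1 hU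
      rw [conjTranspose_mul, conjTranspose_conjTranspose, Matrix.mul_assoc, ← Matrix.mul_assoc U,
        hU', Matrix.one_mul, hW]
    have h' := congrArg Complex.re (congrFun₂ h j j)
    rw [Matrix.mul_apply, Complex.re_sum, one_apply_eq, Complex.one_re] at h'
    rw [← h']
    refine Finset.sum_congr rfl fun i _ => ?_
    simp [conjTranspose_apply, Complex.normSq_apply]
  have hterm : ∀ (i : a × b × c) k p, 0 ≤ Complex.normSq ((Uᴴ * W) i (k, p)) * x i :=
    fun i k p => mul_nonneg (Complex.normSq_nonneg _) (hx i)
  refine ⟨⟨U, W, x, fun i => y i.2, hU, hW, eA, eW, hx, fun i => hy i.2, ?_⟩, ?_⟩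
  · rintro i ⟨k, p⟩ hne hyp
    have h := hmarg p
    rw [show y p = 0 from hyp, Finset.sum_eq_zero_iff_of_nonneg
      fun k _ => Finset.sum_nonneg fun i _ => hterm i k p] at h
    have h := h k (Finset.mem_univ _)
    rw [Finset.sum_eq_zero_iff_of_nonneg fun i _ => hterm i k p] at h
    exact (mul_eq_zero.1 (h i (Finset.mem_univ _))).resolve_left
      (mt Complex.normSq_eq_zero.1 hne)
  · have t1 : ∑ i, ∑ j, Complex.normSq ((Uᴴ * W) i j) * (x i * Real.log (x i)) =
        ∑ i, x i * Real.log (x i) := by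
      simp only [← Finset.sum_mul, hrow, one_mul]
    have t2 : ∑ i, ∑ j : a × b × c, Complex.normSq ((Uᴴ * W) i j) * (x i * Real.log (y j.2)) =
        ∑ p, y p * Real.log (y p) := by
      rw [Finset.sum_comm, Fintype.sum_prod_type, Finset.sum_comm]
      refine Finset.sum_congr rfl fun p _ => ?_
      simp only [← mul_assoc, ← Finset.sum_mul, hmarg p]
    have t3 : ∑ i, ∑ j, Complex.normSq ((Uᴴ * W) i j) * x i = 1 := by
      simp only [← Finset.sum_mul, hrow, one_mul, sx]
    have t4 : ∑ i, ∑ j : a × b × c, Complex.normSq ((Uᴴ * W) i j) * y j.2 = Fintype.card a := by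
      rw [Finset.sum_comm]
      simp only [← Finset.sum_mul, hcol, one_mul]
      rw [Fintype.sum_prod_type]
      simp [sy]
    rw [vnEnt_eq_of_unitary hU eA, vnEnt_eq_of_unitary hV eB, sx, sy]
    simp only [SpectralPair.relEnt, SpectralPair.overlap, klTerm, mul_sub, Finset.sum_sub_distrib,
      t1, t2, t3, t4, Real.negMulLog, neg_mul, Finset.sum_neg_distrib]
    ring

/-- Concavity of the conditional entropy `H(A|BC)`. -/
theorem vnEnt_mBC_sub_vnEnt_convex {ω τ : Matrix (a × b × c) (a × b × c) ℂ} (hω : IsState ω)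
    (hτ : IsState τ) {p q : ℝ} (hp : 0 ≤ p) (hq : 0 ≤ q) (hpq : p + q = 1) :
    vnEnt (mBC (p • ω + q • τ)) - vnEnt (p • ω + q • τ) ≤
      p * (vnEnt (mBC ω) - vnEnt ω) + q * (vnEnt (mBC τ) - vnEnt τ) := by
  have hk : p • kroneckerMap (· * ·) (1 : Matrix a a ℂ) (mBC ω) +
      q • kroneckerMap (· * ·) (1 : Matrix a a ℂ) (mBC τ) =
      kroneckerMap (· * ·) (1 : Matrix a a ℂ) (mBC (p • ω + q • τ)) := by
    rw [mBC_smul_add, kronecker_add, kronecker_smul, kronecker_smul]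
  obtain ⟨P, hP⟩ := exists_spectralPair (hω.mix hτ hp hq hpq) hk
  obtain ⟨P₁, h₁⟩ := exists_spectralPair hω rfl
  obtain ⟨P₂, h₂⟩ := exists_spectralPair hτ rfl
  have h := SpectralPair.relEnt_convex hp hq P P₁ P₂
  rw [hP, h₁, h₂] at h
  have hcard : p * (Fintype.card a : ℝ) + q * Fintype.card a = Fintype.card a := by
    rw [← add_mul, hpq, one_mul]
  linarith

lemma prodABC_eq_submatrix (ω : Matrix (a × b × c) (a × b × c) ℂ) :
    prodABC ω = (kroneckerMap (· * ·) (mAB ω) (mC ω)).submatrix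
      (Equiv.prodAssoc a b c).symm (Equiv.prodAssoc a b c).symm := rfl

lemma IsState.prodABC {ω : Matrix (a × b × c) (a × b × c) ℂ} (hω : IsState ω) :
    IsState (prodABC ω) := by
  refine ⟨?_, ?_⟩
  · rw [prodABC_eq_submatrix]
    exact (hω.mAB.1.kronecker hω.mC.1).submatrix _
  · have h : (_root_.prodABC ω).trace = (_root_.mAB ω).trace * (_root_.mC ω).trace := by
      simp only [trace, diag_apply, _root_.prodABC, of_apply, Fintype.sum_prod_type]
      simp only [Finset.sum_mul, ← Finset.mul_sum]
    rw [h, hω.mAB.2, hω.mC.2, one_mul]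

lemma mBC_prodABC (ω : Matrix (a × b × c) (a × b × c) ℂ) :
    mBC (prodABC ω) = kroneckerMap (· * ·) (mB ω) (mC ω) := by
  ext p q
  simp [mBC, prodABC, mAB, mB, Finset.sum_mul]

lemma mAB_mix {ω : Matrix (a × b × c) (a × b × c) ℂ} (hω : IsState ω) (ε : ℝ) :
    mAB ((1 - ε) • ω + ε • prodABC ω) = mAB ω := by
  have hC : ∑ k, mC ω k k = 1 := hω.mC.2
  have h : mAB (prodABC ω) = mAB ω := by
    ext p q
    simp only [mAB, prodABC, of_apply]
    rw [← Finset.mul_sum, hC, mul_one]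
  have hl : mAB ((1 - ε) • ω + ε • prodABC ω) = (1 - ε) • mAB ω + ε • mAB (prodABC ω) := by
    ext i j
    simp [mAB, Finset.sum_add_distrib, Finset.mul_sum]
  rw [hl, h, ← add_smul, sub_add_cancel, one_smul]

end ConditionalEntropy

/-- For `ω^ε = (1−ε)ω + ε·ω_AB ⊗ ω_C` one has `I(A:C|B)_{ω^ε} ≤ (1−ε)I(A:C|B)_ω`. -/
theorem cmi_perturbation_le {a b c : Type*} [Fintype a] [DecidableEq a] [Fintype b]
    [DecidableEq b] [Fintype c] [DecidableEq c]
    (ω : Matrix (a × b × c) (a × b × c) ℂ) (hω : IsState ω)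
    (ε : ℝ) (h0 : 0 < ε) (h1 : ε < 1) :
    cmi ((1 - ε) • ω + ε • prodABC ω) ≤ (1 - ε) * cmi ω := by
  have hAB := mAB_mix hω ε
  have hB : mB ((1 - ε) • ω + ε • prodABC ω) = mB ω := by
    rw [mB_eq_mAB, hAB, ← mB_eq_mAB]
  have key := vnEnt_mBC_sub_vnEnt_convex hω hω.prodABC (sub_pos.2 h1).le h0.le
    (sub_add_cancel 1 ε)
  have hprod : vnEnt (prodABC ω) = vnEnt (mAB ω) + vnEnt (mC ω) := by
    rw [prodABC_eq_submatrix, vnEnt_submatrix_equiv (hω.mAB.1.kronecker hω.mC.1).1,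
      vnEnt_kronecker hω.mAB hω.mC]
  rw [hprod, mBC_prodABC, vnEnt_kronecker hω.mB hω.mC] at key
  rw [cmi, cmi, hAB, hB]
  linarith
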